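/- arXiv:2404.01788 — 2 statements merged into one kernel-verified Lean document; each statement's English description precedes it below -/
import Mathlib

section
/- For every positive integer n, ∑_{π ∈ 𝔖_n} (−1)^{inv(π)} q^{drp(π)} = (1 − q)^{n−1} as polynomials in q over the integers. -/
open Finset

/-- The one-line notation value of `π` at position `k ∈ {1,…,n}`:
`oneLine π k = π(k)` with `1`-indexed positions and values. -/
def oneLine {n : ℕ} (π : Equiv.Perm (Fin n)) (k : ℕ) : ℕ :=
  if h : k - 1 < n then ((π ⟨k - 1, h⟩ : Fin n) : ℕ) + 1 else k

/-- `SUC(π) = {i ∈ {1,…,n-1} : π(i+1) = π(i)+1}` (position set). -/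
def SUC {n : ℕ} (π : Equiv.Perm (Fin n)) : Finset ℕ :=
  (Finset.Icc 1 (n - 1)).filter (fun i => oneLine π (i + 1) = oneLine π i + 1)

/-- `FIX(π) = {i ∈ {1,…,n-1} : π(i) = i}` (position set). -/
def FIX {n : ℕ} (π : Equiv.Perm (Fin n)) : Finset ℕ :=
  (Finset.Icc 1 (n - 1)).filter (fun i => oneLine π i = i)

/-- `Asc₂(π) = {π(i+1) : i ∈ {1,…,n-1}, π(i+1) ≥ π(i)+2}` (value set). -/
def Asc2 {n : ℕ} (π : Equiv.Perm (Fin n)) : Finset ℕ :=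
  ((Finset.Icc 1 (n - 1)).filter (fun i => oneLine π i + 2 ≤ oneLine π (i + 1))).image
    (fun i => oneLine π (i + 1))

/-- `Des(π) = {π(i+1) : i ∈ {1,…,n-1}, π(i) > π(i+1)}` (value set). -/
def DesSet {n : ℕ} (π : Equiv.Perm (Fin n)) : Finset ℕ :=
  ((Finset.Icc 1 (n - 1)).filter (fun i => oneLine π (i + 1) < oneLine π i)).image
    (fun i => oneLine π (i + 1))

/-- `Suc(π) = {π(i+1) : i ∈ {1,…,n-1}, π(i+1) = π(i)+1}` (value set). -/
def SucSet {n : ℕ} (π : Equiv.Perm (Fin n)) : Finset ℕ :=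
  ((Finset.Icc 1 (n - 1)).filter (fun i => oneLine π (i + 1) = oneLine π i + 1)).image
    (fun i => oneLine π (i + 1))

/-- `Aexc(π) = {π(i) : i ∈ {2,…,n}, π(i) < i}` (value set). -/
def Aexc {n : ℕ} (π : Equiv.Perm (Fin n)) : Finset ℕ :=
  ((Finset.Icc 2 n).filter (fun i => oneLine π i < i)).image (fun i => oneLine π i)

/-- `Êxc(π) = {π(i) : i ∈ {2,…,n}, π(i) > i}` (value set). -/
def ExcHat {n : ℕ} (π : Equiv.Perm (Fin n)) : Finset ℕ :=
  ((Finset.Icc 2 n).filter (fun i => i < oneLine π i)).image (fun i => oneLine π i)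

/-- `F̂ix(π) = {π(i) : i ∈ {2,…,n}, π(i) = i}` (value set). -/
def FixHat {n : ℕ} (π : Equiv.Perm (Fin n)) : Finset ℕ :=
  ((Finset.Icc 2 n).filter (fun i => oneLine π i = i)).image (fun i => oneLine π i)

/-- `depth(π) = ∑_{i : π(i) > i} (π(i) − i)`. -/
def depthStat {n : ℕ} (π : Equiv.Perm (Fin n)) : ℕ :=
  ∑ i ∈ (Finset.Icc 1 n).filter (fun i => i < oneLine π i), (oneLine π i - i)

/-- `drp(π) = ∑_{i ∈ {1,…,n-1} : π(i) > π(i+1)} (π(i) − π(i+1))`. -/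
def drpStat {n : ℕ} (π : Equiv.Perm (Fin n)) : ℕ :=
  ∑ i ∈ (Finset.Icc 1 (n - 1)).filter (fun i => oneLine π (i + 1) < oneLine π i),
    (oneLine π i - oneLine π (i + 1))

/-- `exc(π) = |{i ∈ {1,…,n} : π(i) > i}|`. -/
def excNum {n : ℕ} (π : Equiv.Perm (Fin n)) : ℕ :=
  ((Finset.Icc 1 n).filter (fun i => i < oneLine π i)).card

/-- `nexc(π) = |{i ∈ {1,…,n} : π(i) < i}|`. -/
def nexcNum {n : ℕ} (π : Equiv.Perm (Fin n)) : ℕ :=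
  ((Finset.Icc 1 n).filter (fun i => oneLine π i < i)).card

/-- `des(π) = |{i ∈ {1,…,n-1} : π(i) > π(i+1)}|`. -/
def desNum {n : ℕ} (π : Equiv.Perm (Fin n)) : ℕ :=
  ((Finset.Icc 1 (n - 1)).filter (fun i => oneLine π (i + 1) < oneLine π i)).card

/-- `asc(π) = |{i ∈ {1,…,n-1} : π(i) < π(i+1)}|`. -/
def ascNum {n : ℕ} (π : Equiv.Perm (Fin n)) : ℕ :=
  ((Finset.Icc 1 (n - 1)).filter (fun i => oneLine π i < oneLine π (i + 1))).card

/-- `inv(π) = |{(i,j) : 1 ≤ i < j ≤ n, π(i) > π(j)}|`. -/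
def invNum {n : ℕ} (π : Equiv.Perm (Fin n)) : ℕ :=
  (((Finset.Icc 1 n) ×ˢ (Finset.Icc 1 n)).filter
    (fun p : ℕ × ℕ => p.1 < p.2 ∧ oneLine π p.2 < oneLine π p.1)).card

/-- The total drop `∑ (f i - f (i + 1))⁺` of a finite sequence of natural numbers. -/
def totalDrop {n : ℕ} (f : Fin (n + 1) → ℕ) : ℕ :=
  ∑ i : Fin n, (f i.castSucc - f i.succ)

lemma totalDrop_succ {n : ℕ} (f : Fin (n + 2) → ℕ) :
    totalDrop f = (f 0 - f 1) + totalDrop (fun i => f i.succ) := by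
  simp [totalDrop, Fin.sum_univ_succ (n := n)]

/-- The permutation whose one-line notation starts with `p`, followed by the remaining values in
the relative order prescribed by `e`. -/
def consPerm {n : ℕ} (p : Fin (n + 1)) (e : Equiv.Perm (Fin n)) : Equiv.Perm (Fin (n + 1)) :=
  p.cycleRange.symm * Equiv.Perm.decomposeFin.symm (0, e)

@[simp]
lemma consPerm_zero {n : ℕ} (p : Fin (n + 1)) (e : Equiv.Perm (Fin n)) :
    consPerm p e 0 = p := by
  simp [consPerm]

@[simp]
lemma consPerm_succ {n : ℕ} (p : Fin (n + 1)) (e : Equiv.Perm (Fin n)) (i : Fin n) :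
    consPerm p e i.succ = p.succAbove (e i) := by
  simp [consPerm]

lemma sign_consPerm {n : ℕ} (p : Fin (n + 1)) (e : Equiv.Perm (Fin n)) :
    Equiv.Perm.sign (consPerm p e) = (-1) ^ (p : ℕ) * Equiv.Perm.sign e := by
  simp [consPerm]

lemma consPerm_bijective (n : ℕ) :
    Function.Bijective (fun x : Fin (n + 1) × Equiv.Perm (Fin n) => consPerm x.1 x.2) := by
  rw [Fintype.bijective_iff_injective_and_card]
  refine ⟨?_, by simp [Fintype.card_perm, Nat.factorial_succ]⟩
  rintro ⟨p, e⟩ ⟨p', e'⟩ h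
  have key : ∀ i, consPerm p e i = consPerm p' e' i := fun i => by
    simpa using congrArg (fun σ : Equiv.Perm (Fin (n + 1)) => σ i) h
  obtain rfl : p = p' := by simpa using key 0
  refine Prod.ext rfl (Equiv.ext fun i => ?_)
  simpa using key i.succ

lemma sum_perm_eq_sum_consPerm {M : Type*} [AddCommMonoid M] {n : ℕ}
    (f : Equiv.Perm (Fin (n + 1)) → M) :
    ∑ π, f π = ∑ p, ∑ e, f (consPerm p e) := by
  rw [← (consPerm_bijective n).sum_comp, Fintype.sum_prod_type]

/-- The signed generating polynomial of the total drop of `a ∘ π` over all `π` with first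
value `p`. -/
noncomputable def headSum {n : ℕ} (a : Fin (n + 1) → ℕ) (p : Fin (n + 1)) : Polynomial ℤ :=
  ∑ e : Equiv.Perm (Fin n), ((Equiv.Perm.sign (consPerm p e) : ℤ) : Polynomial ℤ) *
    Polynomial.X ^ totalDrop (fun i => a (consPerm p e i))

lemma headSum_succ {n : ℕ} (a : Fin (n + 2) → ℕ) (p : Fin (n + 2)) :
    headSum a p = (-1) ^ (p : ℕ) * ∑ k, Polynomial.X ^ (a p - a (p.succAbove k)) *
      headSum (fun i => a (p.succAbove i)) k := by
  rw [headSum, sum_perm_eq_sum_consPerm, Finset.mul_sum]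
  refine Finset.sum_congr rfl fun k _ => ?_
  rw [headSum, Finset.mul_sum, Finset.mul_sum]
  refine Finset.sum_congr rfl fun e _ => ?_
  have h1 : consPerm p (consPerm k e) 1 = p.succAbove k := by
    rw [← Fin.succ_zero_eq_one, consPerm_succ, consPerm_zero]
  rw [sign_consPerm p, totalDrop_succ, pow_add, consPerm_zero, h1]
  simp only [consPerm_succ]
  push_cast
  ring

open Polynomial in
/-- Only permutations starting with the smallest or second smallest value survive the
cancellation. -/
lemma headSum_of_monotone {n : ℕ} (a : Fin (n + 2) → ℕ) (ha : Monotone a) :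
    headSum a 0 = ∏ i : Fin n, (1 - X ^ (a i.succ.succ - a i.succ.castSucc)) ∧
    headSum a 1 =
      -X ^ (a 1 - a 0) * ∏ i : Fin n, (1 - X ^ (a i.succ.succ - a i.succ.castSucc)) ∧
    ∀ k : Fin n, headSum a k.succ.succ = 0 := by
  induction n with
  | zero =>
    refine ⟨?_, ?_, fun k => k.elim0⟩
    · simp [headSum, totalDrop, sign_consPerm, Nat.sub_eq_zero_of_le (ha (Fin.zero_le 1))]
    · simp [headSum, totalDrop, sign_consPerm]
  | succ n ih =>
    have key (p : Fin (n + 3)) := ih (fun i => a (p.succAbove i))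
      (ha.comp p.strictMono_succAbove.monotone)
    refine ⟨?_, ?_, fun k => ?_⟩
    · obtain ⟨h0, h1, h2⟩ := key 0
      have hle (i : Fin (n + 3)) : a 0 - a i = 0 := Nat.sub_eq_zero_of_le (ha (Fin.zero_le i))
      rw [headSum_succ, Fin.sum_univ_succ, Fin.sum_univ_succ, Fin.prod_univ_succ]
      simp only [Fin.succ_zero_eq_one, h0, h1, h2, hle]
      simp
      ring
    · obtain ⟨h0, h1, h2⟩ := key 1
      have h01 : a 0 ≤ a 1 := ha (Fin.zero_le _)
      have h12 : a 1 ≤ a 2 := ha (by rw [Fin.le_def, Fin.val_one, Fin.val_two]; omega)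
      have hle : a 1 - a 2 = 0 := Nat.sub_eq_zero_of_le h12
      have hadd : a 2 - a 0 = (a 1 - a 0) + (a 2 - a 1) := by omega
      rw [headSum_succ, Fin.sum_univ_succ, Fin.sum_univ_succ, Fin.prod_univ_succ]
      simp only [Fin.succ_zero_eq_one, h0, h1, h2]
      simp [hle, hadd, pow_add]
      ring
    · obtain ⟨h0, h1, h2⟩ := key k.succ.succ
      have h01 : a 0 ≤ a 1 := ha (Fin.zero_le _)
      have h1k : a 1 ≤ a k.succ.succ := ha (by simp [Fin.le_def])
      have hadd : a k.succ.succ - a 0 = (a k.succ.succ - a 1) + (a 1 - a 0) := by omega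
      rw [headSum_succ, Fin.sum_univ_succ, Fin.sum_univ_succ]
      simp only [Fin.succ_zero_eq_one, h0, h1, h2]
      simp [hadd, pow_add]
      ring

open Polynomial in
lemma sum_headSum_of_monotone {n : ℕ} (a : Fin (n + 1) → ℕ) (ha : Monotone a) :
    ∑ p, headSum a p = ∏ i : Fin n, (1 - X ^ (a i.succ - a i.castSucc)) := by
  cases n with
  | zero => simp [headSum, totalDrop, sign_consPerm]
  | succ n =>
    obtain ⟨h0, h1, h2⟩ := headSum_of_monotone a ha
    rw [Fin.sum_univ_succ, Fin.sum_univ_succ, Fin.prod_univ_succ]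
    simp [h0, h1, h2]
    ring

lemma oneLine_val_add_one {n : ℕ} (π : Equiv.Perm (Fin n)) (i : Fin n) :
    oneLine π (i + 1) = π i + 1 := by
  simp [oneLine]

lemma neg_one_pow_invNum {n : ℕ} (π : Equiv.Perm (Fin n)) :
    (-1 : ℤ) ^ invNum π = Equiv.Perm.sign π := by
  have h : invNum π = ∑ i, #{j ∈ Finset.Ioi i | ¬ π i < π j} := by
    rw [← Finset.card_sigma, invNum]
    symm
    refine Finset.card_bij (fun x _ => ((x.1 : ℕ) + 1, (x.2 : ℕ) + 1)) ?_ ?_ ?_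
    · rintro ⟨i, j⟩ hx
      simp only [Finset.mem_sigma, Finset.mem_univ, true_and, Finset.mem_filter,
        Finset.mem_Ioi] at hx
      have hne : π i ≠ π j := fun h => hx.1.ne (π.injective h)
      have hlt : π j < π i := lt_of_le_of_ne (not_lt.1 hx.2) hne.symm
      simp only [Finset.mem_filter, Finset.mem_product, Finset.mem_Icc, oneLine_val_add_one]
      have := hx.1
      omega
    · rintro ⟨i, j⟩ _ ⟨i', j'⟩ _ h
      simp only [Prod.mk.injEq, Nat.add_right_cancel_iff, Fin.val_inj] at h
      obtain ⟨rfl, rfl⟩ := h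
      rfl
    · rintro ⟨k, l⟩ h
      simp only [Finset.mem_filter, Finset.mem_product, Finset.mem_Icc] at h
      obtain ⟨i, rfl⟩ : ∃ i : Fin n, (i : ℕ) + 1 = k := ⟨⟨k - 1, by omega⟩, by simp; omega⟩
      obtain ⟨j, rfl⟩ : ∃ j : Fin n, (j : ℕ) + 1 = l := ⟨⟨l - 1, by omega⟩, by simp; omega⟩
      simp only [oneLine_val_add_one] at h
      refine ⟨⟨i, j⟩, ?_, rfl⟩
      simp only [Finset.mem_sigma, Finset.mem_univ, true_and, Finset.mem_filter, Finset.mem_Ioi]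
      omega
  rw [h, Equiv.Perm.sign_eq_prod_prod_Ioi]
  push_cast
  rw [← Finset.prod_pow_eq_pow_sum]
  refine Finset.prod_congr rfl fun i _ => ?_
  simp [Finset.prod_ite, apply_ite]

lemma drpStat_eq_totalDrop {n : ℕ} (π : Equiv.Perm (Fin (n + 1))) :
    drpStat π = totalDrop (fun i => (π i : ℕ)) := by
  rw [drpStat, Finset.sum_filter_of_ne (fun _ _ h => by omega), totalDrop]
  symm
  refine Finset.sum_bij (fun i _ => (i : ℕ) + 1) ?_ ?_ ?_ ?_
  · intro i _
    simp only [Finset.mem_Icc]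
    omega
  · intro i _ j _ h
    exact Fin.ext (by omega)
  · intro k h
    simp only [Finset.mem_Icc] at h
    exact ⟨⟨k - 1, by omega⟩, Finset.mem_univ _, by simp; omega⟩
  · intro i _
    have h1 := oneLine_val_add_one π i.castSucc
    have h2 := oneLine_val_add_one π i.succ
    simp only [Fin.val_castSucc, Fin.val_succ] at h1 h2
    rw [h1, h2, Nat.add_sub_add_right]

/-- ∑ (−1)^{inv(π)} q^{drp(π)} = (1 − q)^{n−1}. -/
theorem stmt8 (n : ℕ) (hn : 0 < n) :
    (∑ π : Equiv.Perm (Fin n),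
        (-1 : Polynomial ℤ) ^ invNum π * Polynomial.X ^ drpStat π) =
      (1 - Polynomial.X : Polynomial ℤ) ^ (n - 1) := by
  obtain ⟨m, rfl⟩ : ∃ m, n = m + 1 := ⟨n - 1, by omega⟩
  have h := sum_headSum_of_monotone (fun i : Fin (m + 1) => (i : ℕ)) Fin.val_strictMono.monotone
  simp only [headSum] at h
  rw [← sum_perm_eq_sum_consPerm (fun π => ((Equiv.Perm.sign π : ℤ) : Polynomial ℤ) *
    Polynomial.X ^ totalDrop (fun i => (π i : ℕ)))] at h
  simpa [← neg_one_pow_invNum, ← drpStat_eq_totalDrop] using h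
end

section
/- For every positive integer n and every subset I of {1,...,n}, the number of permutations π of {1,...,n} with Êxc(π) = I equals the number of permutations π of {1,...,n} with Asc₂(π) = I. -/
open Finset

/-- The smallest letter among the positions up to `i` of the word `w`. -/
def prefixMin {n : ℕ} (w : Equiv.Perm (Fin n)) (i : Fin n) : Fin n :=
  (Finset.Iic i).inf' Finset.nonempty_Iic w

theorem prefixMin_le {n : ℕ} (w : Equiv.Perm (Fin n)) {i j : Fin n} (h : j ≤ i) :
    prefixMin w i ≤ w j :=
  Finset.inf'_le _ (Finset.mem_Iic.2 h)

theorem exists_prefixMin_eq {n : ℕ} (w : Equiv.Perm (Fin n)) (i : Fin n) :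
    ∃ j ≤ i, prefixMin w i = w j := by
  obtain ⟨j, hj, h⟩ := Finset.exists_mem_eq_inf' (Finset.nonempty_Iic (a := i)) w
  exact ⟨j, Finset.mem_Iic.1 hj, h⟩

/-- The successor of the letter `w i` in the permutation whose cycles are the factors of `w`
starting at the left-to-right minima. -/
def foataNext {n : ℕ} (w : Equiv.Perm (Fin n)) (i : Fin n) : Fin n :=
  if h : (i : ℕ) + 1 < n then max (w ⟨i + 1, h⟩) (prefixMin w i) else prefixMin w i

theorem foataNext_cases {n : ℕ} (w : Equiv.Perm (Fin n)) (i : Fin n) :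
    (∃ k : Fin n, (k : ℕ) = i + 1 ∧ prefixMin w i < w k ∧ foataNext w i = w k) ∨
      ((∀ k : Fin n, (k : ℕ) = i + 1 → w k < prefixMin w i) ∧
        foataNext w i = prefixMin w i) := by
  unfold foataNext
  split_ifs with h
  · rcases lt_or_ge (prefixMin w i) (w ⟨i + 1, h⟩) with hlt | hle
    · exact Or.inl ⟨⟨i + 1, h⟩, rfl, hlt, max_eq_left hlt.le⟩
    · refine Or.inr ⟨fun k hk => ?_, max_eq_right hle⟩
      obtain rfl : k = ⟨i + 1, h⟩ := Fin.ext hk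
      refine lt_of_le_of_ne hle fun heq => ?_
      obtain ⟨j, hj, hm⟩ := exists_prefixMin_eq w i
      have := congrArg Fin.val (w.injective (heq.trans hm))
      have := Fin.le_def.1 hj
      simp only at *
      omega
  · exact Or.inr ⟨fun k hk => absurd k.isLt (by omega), rfl⟩

theorem foataNext_ne_of_lt {n : ℕ} (w : Equiv.Perm (Fin n)) {i j : Fin n} (hij : i < j) :
    foataNext w i ≠ foataNext w j := by
  have hij' := Fin.lt_def.1 hij
  intro h
  rcases foataNext_cases w i with ⟨k, hk, hlt, hi⟩ | ⟨hk, hi⟩ <;>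
    rcases foataNext_cases w j with ⟨l, hl, hlt', hj⟩ | ⟨hl, hj⟩ <;> rw [hi, hj] at h
  · have := congrArg Fin.val (w.injective h)
    omega
  · obtain ⟨p, hp, hm⟩ := exists_prefixMin_eq w i
    exact absurd (hm ▸ prefixMin_le w (hp.trans hij.le)) (not_le.2 (h ▸ hlt))
  · obtain ⟨p, hp, hm⟩ := exists_prefixMin_eq w i
    have := congrArg Fin.val (w.injective (hm.symm.trans h))
    have := Fin.le_def.1 hp
    omega
  · have hlt := hk ⟨i + 1, by omega⟩ rfl
    have hle := prefixMin_le w (i := j) (j := ⟨i + 1, by omega⟩) (Fin.le_def.2 hij')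
    exact absurd hle (not_le.2 (h ▸ hlt))

theorem foataNext_injective {n : ℕ} (w : Equiv.Perm (Fin n)) :
    Function.Injective (foataNext w) := by
  intro i j h
  rcases lt_trichotomy i j with hij | hij | hij
  · exact absurd h (foataNext_ne_of_lt w hij)
  · exact hij
  · exact absurd h.symm (foataNext_ne_of_lt w hij)

/-- Foata's correspondence: the permutation whose cycles are the factors of the word `w`
starting at the left-to-right minima. -/
noncomputable def foata {n : ℕ} (w : Equiv.Perm (Fin n)) : Equiv.Perm (Fin n) :=
  w.symm.trans (Equiv.ofBijective _ (Finite.injective_iff_bijective.1 (foataNext_injective w)))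

theorem foata_apply {n : ℕ} (w : Equiv.Perm (Fin n)) (i : Fin n) :
    foata w (w i) = foataNext w i := by
  simp [foata]

theorem prefixMin_le_of_agree {n : ℕ} {w v : Equiv.Perm (Fin n)} {i : Fin n}
    (h : ∀ j, i < j → w j = v j) : prefixMin w i ≤ prefixMin v i := by
  obtain ⟨j, hj, hm⟩ := exists_prefixMin_eq v i
  obtain ⟨k, hk⟩ := w.surjective (v j)
  rw [hm, ← hk]
  refine prefixMin_le w (not_lt.1 fun hik => ?_)
  have : k = j := v.injective ((h k hik).symm.trans hk)
  exact absurd hj (not_le.2 (this ▸ hik))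

theorem foata_injective {n : ℕ} : Function.Injective (foata (n := n)) := by
  intro w v hwv
  refine Equiv.ext fun i => ?_
  induction i using WellFoundedGT.induction with
  | ind i ih =>
    have hm : prefixMin w i = prefixMin v i :=
      le_antisymm (prefixMin_le_of_agree ih) (prefixMin_le_of_agree fun j hj => (ih j hj).symm)
    have hn : foataNext w i = foataNext v i := by
      unfold foataNext
      split_ifs with h
      · rw [hm, ih ⟨i + 1, h⟩ (Fin.lt_def.2 (Nat.lt_succ_self _))]
      · exact hm
    apply (foata w).injective
    rw [foata_apply, hn, hwv, foata_apply]

/-- Excedances of `foata w` are the ascents of the word `w`. -/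
theorem foata_apply_eq_iff {n : ℕ} (w : Equiv.Perm (Fin n)) {i b : Fin n} (h : w i < b) :
    foata w (w i) = b ↔ ∃ k : Fin n, (k : ℕ) = i + 1 ∧ w k = b := by
  have hle := prefixMin_le w (le_refl i)
  rw [foata_apply]
  rcases foataNext_cases w i with ⟨k, hk, -, hi⟩ | ⟨hk, hi⟩
  · rw [hi]
    refine ⟨fun hb => ⟨k, hk, hb⟩, ?_⟩
    rintro ⟨l, hl, rfl⟩
    rw [Fin.ext (hk.trans hl.symm)]
  · rw [hi]
    refine ⟨fun hb => absurd hle (not_le.2 (hb ▸ h)), ?_⟩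
    rintro ⟨l, hl, rfl⟩
    exact absurd ((hk l hl).trans_le hle) h.asymm

theorem mem_Asc2_iff {n : ℕ} (w : Equiv.Perm (Fin n)) (b : ℕ) :
    b ∈ Asc2 w ↔ ∃ i k : Fin n, (k : ℕ) = i + 1 ∧ (w i : ℕ) + 2 ≤ w k ∧ (w k : ℕ) + 1 = b := by
  simp only [Asc2, Finset.mem_image, Finset.mem_filter, Finset.mem_Icc]
  constructor
  · rintro ⟨i, ⟨⟨h1, h2⟩, h3⟩, rfl⟩
    have hi : i - 1 < n := by omega
    have hk : i + 1 - 1 < n := by omega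
    refine ⟨⟨i - 1, hi⟩, ⟨i + 1 - 1, hk⟩, by simp only; omega, ?_⟩
    simp only [oneLine, dif_pos hi, dif_pos hk] at h3 ⊢
    exact ⟨by omega, trivial⟩
  · rintro ⟨⟨i, hi⟩, ⟨k, hk⟩, hik, h, rfl⟩
    simp only at hik
    subst hik
    refine ⟨i + 1, ⟨⟨by omega, by omega⟩, ?_⟩, ?_⟩ <;>
      simp only [oneLine, Nat.add_sub_cancel, dif_pos hi, dif_pos hk]
    omega

theorem mem_ExcHat_rotate_iff {n : ℕ} (σ : Equiv.Perm (Fin n)) (b : ℕ) :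
    b ∈ ExcHat ((finRotate n).symm.trans σ) ↔
      ∃ j : Fin n, (j : ℕ) + 2 ≤ σ j ∧ (σ j : ℕ) + 1 = b := by
  have key : ∀ (j : ℕ) (hj : j + 1 < n),
      oneLine ((finRotate n).symm.trans σ) (j + 2) = σ ⟨j, by omega⟩ + 1 := by
    intro j hj
    have hj' : j + 2 - 1 < n := by omega
    have : (finRotate n).symm ⟨j + 2 - 1, hj'⟩ = ⟨j, by omega⟩ := by
      obtain ⟨m, rfl⟩ : ∃ m, n = m + 1 := ⟨n - 1, by omega⟩
      rw [Equiv.symm_apply_eq, finRotate_of_lt (by omega)]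
      rfl
    rw [oneLine, dif_pos hj', Equiv.trans_apply, this]
  simp only [ExcHat, Finset.mem_image, Finset.mem_filter, Finset.mem_Icc]
  constructor
  · rintro ⟨i, ⟨⟨h1, h2⟩, h3⟩, rfl⟩
    obtain ⟨j, rfl⟩ : ∃ j, i = j + 2 := ⟨i - 2, by omega⟩
    rw [key j (by omega)] at h3 ⊢
    exact ⟨⟨j, by omega⟩, by simp only; omega, rfl⟩
  · rintro ⟨⟨j, hj⟩, h, rfl⟩
    have hlt := (σ ⟨j, hj⟩).isLt
    simp only at h
    have := key j (by omega)
    exact ⟨j + 2, ⟨⟨by omega, by omega⟩, by omega⟩, this⟩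

theorem ExcHat_rotate_foata {n : ℕ} (w : Equiv.Perm (Fin n)) :
    ExcHat ((finRotate n).symm.trans (foata w)) = Asc2 w := by
  ext b
  rw [mem_ExcHat_rotate_iff, mem_Asc2_iff, w.surjective.exists]
  refine exists_congr fun i => ?_
  constructor
  · rintro ⟨h, rfl⟩
    obtain ⟨k, hk, hkb⟩ :=
      (foata_apply_eq_iff w (Fin.lt_def.2 (by omega : (w i : ℕ) < foata w (w i)))).1 rfl
    exact ⟨k, hk, hkb ▸ h, by rw [hkb]⟩
  · rintro ⟨k, hk, h, rfl⟩
    rw [(foata_apply_eq_iff w (Fin.lt_def.2 (by omega : (w i : ℕ) < w k))).2 ⟨k, hk, rfl⟩]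
    exact ⟨h, rfl⟩

/-- Êxc and Asc₂ are equidistributed as set-valued statistics. -/
theorem stmt15 (n : ℕ) (hn : 0 < n) (I : Finset ℕ) (hI : I ⊆ Finset.Icc 1 n) :
    (Finset.univ.filter (fun π : Equiv.Perm (Fin n) => ExcHat π = I)).card =
      (Finset.univ.filter (fun π : Equiv.Perm (Fin n) => Asc2 π = I)).card := by
  have hinj : Function.Injective
      fun w : Equiv.Perm (Fin n) => (finRotate n).symm.trans (foata w) := fun w v h =>
    foata_injective (mul_right_cancel (b := (finRotate n).symm) h)
  symm
  refine Finset.card_bijective _ (Finite.injective_iff_bijective.1 hinj) fun w => ?_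
  simp [ExcHat_rotate_foata]
end
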